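/- Let $n \ge 1$, let $a, b$ be nonzero $n \times n$ complex matrices, let $p > 1$ and $q > 1$ satisfy $1/p + 1/q = 1$. Then $\|a b^*\|_1 = \|a\|_p \, \|b\|_q$ if and only if $\dfrac{|a|^p}{\|a\|_p^p} = \dfrac{|b|^q}{\|b\|_q^q}$. -/

import Mathlib

open Matrix
open scoped ComplexOrder MatrixOrder

/-- `matAbs x` is `|x|`, the unique positive semidefinite square root of `xᴴ * x`. -/
noncomputable def matAbs {n : ℕ} (x : Matrix (Fin n) (Fin n) ℂ) : Matrix (Fin n) (Fin n) ℂ :=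
  CFC.sqrt (xᴴ * x)

/-- `matRpow x r` is the real power `x ^ r` defined via the continuous functional calculus. -/
noncomputable def matRpow {n : ℕ} (x : Matrix (Fin n) (Fin n) ℂ) (r : ℝ) :
    Matrix (Fin n) (Fin n) ℂ :=
  cfc (fun t : ℝ => t ^ r) x

/-- The Schatten `r`-norm `(Tr(|x|^r))^(1/r)`. -/
noncomputable def schatten {n : ℕ} (r : ℝ) (x : Matrix (Fin n) (Fin n) ℂ) : ℝ :=
  (Matrix.trace (matRpow (matAbs x) r)).re ^ (1 / r)


open scoped Matrix.Norms.L2Operator in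
lemma hol_col {n : ℕ} (G : Matrix (Fin n) (Fin n) ℂ) (hG : ‖G‖ ≤ 1) (i : Fin n) :
    ∑ j, ‖G j i‖ ^ 2 ≤ 1 := by
  have h := Matrix.l2_opNorm_mulVec G (EuclideanSpace.single i 1)
  have h1 : ‖G‖ * ‖(EuclideanSpace.single i 1 : EuclideanSpace ℂ (Fin n))‖ ≤ 1 := by simpa using hG
  have h2 := h.trans h1
  rw [EuclideanSpace.norm_eq] at h2
  have h3 := Real.sqrt_le_one.mp h2
  simpa using h3

open scoped Matrix.Norms.L2Operator in
lemma hol_row {n : ℕ} (G : Matrix (Fin n) (Fin n) ℂ) (hG : ‖G‖ ≤ 1) (i : Fin n) :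
    ∑ j, ‖G i j‖ ^ 2 ≤ 1 := by
  have := hol_col Gᴴ (by rwa [Matrix.l2_opNorm_conjTranspose]) i
  simpa using this

lemma hol_cfc_mul {n : ℕ} (A : Matrix (Fin n) (Fin n) ℂ) (f g : ℝ → ℝ) :
    cfc f A * cfc g A = cfc (fun t => f t * g t) A :=
  (cfc_mul f g A (Matrix.finite_real_spectrum.continuousOn f)
    (Matrix.finite_real_spectrum.continuousOn g)).symm

lemma hol_spec {n : ℕ} (A : Matrix (Fin n) (Fin n) ℂ) (hA : 0 ≤ A) :
    ∃ (E : Matrix (Fin n) (Fin n) ℂ) (α : Fin n → ℝ), Eᴴ * E = 1 ∧ E * Eᴴ = 1 ∧ (∀ i, 0 ≤ α i) ∧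
      ∀ f : ℝ → ℝ, cfc f A = E * diagonal (fun i => (f (α i) : ℂ)) * Eᴴ := by
  have hp := Matrix.nonneg_iff_posSemidef.mp hA
  refine ⟨hp.1.eigenvectorUnitary, hp.1.eigenvalues, ?_, ?_, hp.eigenvalues_nonneg, fun f => ?_⟩
  · exact Unitary.coe_star_mul_self hp.1.eigenvectorUnitary
  · exact Unitary.coe_mul_star_self hp.1.eigenvectorUnitary
  · rw [hp.1.cfc_eq, Matrix.IsHermitian.cfc, Unitary.conjStarAlgAut_apply]
    rfl

lemma hol_abs_nonneg {n : ℕ} (x : Matrix (Fin n) (Fin n) ℂ) : 0 ≤ matAbs x := CFC.sqrt_nonneg _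

lemma hol_abs_sq {n : ℕ} (x : Matrix (Fin n) (Fin n) ℂ) : matAbs x * matAbs x = xᴴ * x :=
  CFC.sqrt_mul_sqrt_self _ (star_mul_self_nonneg x)

open scoped Matrix.Norms.L2Operator in
lemma hol_polar {n : ℕ} (x : Matrix (Fin n) (Fin n) ℂ) :
    ∃ W : Matrix (Fin n) (Fin n) ℂ, ‖W‖ ≤ 1 ∧ x = W * matAbs x ∧ Wᴴ * x = matAbs x ∧
      Wᴴ * W * matAbs x = matAbs x := by
  set A := matAbs x with hAd
  have hA : 0 ≤ A := hol_abs_nonneg x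
  have hs : IsSelfAdjoint A := IsSelfAdjoint.of_nonneg hA
  have hAA : xᴴ * x = A * A := (hol_abs_sq x).symm
  have hid : A = cfc (fun t : ℝ => t) A := (cfc_id' ℝ A).symm
  set Q := cfc (fun t : ℝ => t⁻¹) A with hQ
  have hQs : Qᴴ = Q := (cfc_predicate (fun t : ℝ => t⁻¹) A : IsSelfAdjoint Q)
  have e1 : Q * (A * A) = A := by
    nth_rewrite 1 2 [hid]
    rw [hQ, hol_cfc_mul, hol_cfc_mul]
    conv_rhs => rw [hid]
    congr 1; ext t
    by_cases h : t = 0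
    · simp [h]
    · field_simp
  have e1' : (A * A) * Q = A := by
    have := congrArg conjTranspose e1
    simp only [conjTranspose_mul, hQs] at this
    rwa [show Aᴴ = A from hs] at this
  have e2 : (x * Q)ᴴ * x = A := by
    rw [conjTranspose_mul, hQs, mul_assoc, hAA, e1]
  have e3 : (x * Q)ᴴ * (x * Q) * A = A := by
    rw [← mul_assoc, e2]
    have : cfc (fun t : ℝ => t) A * cfc (fun t : ℝ => t⁻¹) A * cfc (fun t : ℝ => t) A
        = cfc (fun t : ℝ => t) A := by
      rw [hol_cfc_mul, hol_cfc_mul]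
      congr 1; ext t
      by_cases h : t = 0
      · simp [h]
      · field_simp
    rwa [← hid] at this
  refine ⟨x * Q, ?_, ?_, e2, e3⟩
  · have hP : (x * Q)ᴴ * (x * Q) = A * Q := by rw [← mul_assoc, e2]
    have hn := Matrix.l2_opNorm_conjTranspose_mul_self (x * Q)
    have hle : ‖A * Q‖ ≤ 1 := by
      rw [hQ]; nth_rewrite 1 [hid]; rw [hol_cfc_mul]
      refine norm_cfc_le zero_le_one fun t _ => ?_
      by_cases h : t = 0
      · simp [h]
      · simp [h]
    rw [hP] at hn
    nlinarith [norm_nonneg (x * Q)]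
  · have : (x - x * Q * A)ᴴ * (x - x * Q * A) = 0 := by
      have h4 : xᴴ * (x * Q * A) = A * A := by
        rw [mul_assoc, ← mul_assoc, hAA, ← mul_assoc, e1']
      have h5 : (x * Q * A)ᴴ * x = A * A := by
        rw [conjTranspose_mul, mul_assoc, e2, show Aᴴ = A from hs]
      have h6 : (x * Q * A)ᴴ * (x * Q * A) = A * A := by
        rw [conjTranspose_mul, mul_assoc, ← mul_assoc _ _ A, e3, show Aᴴ = A from hs]
      rw [conjTranspose_sub, sub_mul, mul_sub, mul_sub, h4, h5, h6, hAA]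
      simp
    rw [Matrix.conjTranspose_mul_self_eq_zero] at this
    exact sub_eq_zero.mp this

lemma hol_young {x y p q : ℝ} (hx : 0 ≤ x) (hy : 0 ≤ y) (hp : 1 < p) (hq : 1 < q)
    (hpq : 1 / p + 1 / q = 1) :
    x * y ≤ x ^ p / p + y ^ q / q ∧ (x * y = x ^ p / p + y ^ q / q → x ^ p = y ^ q) := by
  have hp0 : 0 < p := by linarith
  have hq0 : 0 < q := by linarith
  have e1 : (x ^ p) ^ (1 / p) = x := by
    rw [one_div, Real.rpow_rpow_inv hx hp0.ne']
  have e2 : (y ^ q) ^ (1 / q) = y := by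
    rw [one_div, Real.rpow_rpow_inv hy hq0.ne']
  have h1 := Real.geom_mean_le_arith_mean2_weighted (p₁ := x ^ p) (p₂ := y ^ q)
    (one_div_pos.2 hp0).le (one_div_pos.2 hq0).le (by positivity) (by positivity) hpq
  have h2 := Real.geom_mean_eq_arith_mean2_weighted_iff_of_pos (p₁ := x ^ p) (p₂ := y ^ q)
    (one_div_pos.2 hp0) (one_div_pos.2 hq0) (by positivity) (by positivity) hpq
  rw [e1, e2] at h1 h2
  have e3 : x ^ p / p + y ^ q / q = 1 / p * x ^ p + 1 / q * y ^ q := by ring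
  rw [e3]
  exact ⟨h1, h2.1⟩

lemma hol_core {n : ℕ} (G H : Matrix (Fin n) (Fin n) ℂ) (α β : Fin n → ℝ)
    (hα : ∀ i, 0 ≤ α i) (hβ : ∀ i, 0 ≤ β i) {p q : ℝ} (hp : 1 < p) (hq : 1 < q)
    (hpq : 1 / p + 1 / q = 1) (sα : ∑ i, α i ^ p = 1) (sβ : ∑ i, β i ^ q = 1)
    (hGc : ∀ i, ∑ j, ‖G j i‖ ^ 2 ≤ 1) (hGr : ∀ j, ∑ i, ‖G j i‖ ^ 2 ≤ 1)
    (hHr : ∀ i, ∑ j, ‖H i j‖ ^ 2 ≤ 1) (hHc : ∀ j, ∑ i, ‖H i j‖ ^ 2 ≤ 1)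
    (h : ∑ i, ∑ j, (α i * β j) * (G j i * H i j).re = 1) :
    ∀ i j, H i j ≠ 0 → α i ^ p = β j ^ q := by
  have hp0 : 0 < p := by linarith
  have hq0 : 0 < q := by linarith
  set M : Fin n → Fin n → ℝ := fun i j => (‖G j i‖ ^ 2 + ‖H i j‖ ^ 2) / 2 with hM
  have hM0 : ∀ i j, 0 ≤ M i j := fun i j => by simp only [hM]; positivity
  have hre : ∀ i j, (G j i * H i j).re ≤ M i j := fun i j => by
    have := Complex.re_le_norm (G j i * H i j)
    rw [norm_mul] at this
    simp only [hM]
    nlinarith [sq_nonneg (‖G j i‖ - ‖H i j‖)]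
  have hMr : ∀ i, ∑ j, M i j ≤ 1 := fun i => by
    simp only [hM, ← Finset.sum_div, Finset.sum_add_distrib]
    linarith [hGc i, hHr i]
  have hMc : ∀ j, ∑ i, M i j ≤ 1 := fun j => by
    simp only [hM, ← Finset.sum_div, Finset.sum_add_distrib]
    linarith [hGr j, hHc j]
  have hy := fun i j => hol_young (hα i) (hβ j) hp hq hpq
  have b1 : 1 ≤ ∑ i, ∑ j, (α i * β j) * M i j := by
    rw [← h]
    exact Finset.sum_le_sum fun i _ => Finset.sum_le_sum fun j _ =>
      mul_le_mul_of_nonneg_left (hre i j) (mul_nonneg (hα i) (hβ j))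
  have b2 : ∑ i, ∑ j, (α i ^ p / p) * M i j ≤ 1 / p := by
    calc _ ≤ ∑ i, α i ^ p / p := Finset.sum_le_sum fun i _ => by
          rw [← Finset.mul_sum]
          exact mul_le_of_le_one_right (div_nonneg (Real.rpow_nonneg (hα i) _) hp0.le) (hMr i)
      _ = 1 / p := by rw [← Finset.sum_div, sα]
  have b3 : ∑ i, ∑ j, (β j ^ q / q) * M i j ≤ 1 / q := by
    rw [Finset.sum_comm]
    calc _ ≤ ∑ j, β j ^ q / q := Finset.sum_le_sum fun i _ => by
          rw [← Finset.mul_sum]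
          exact mul_le_of_le_one_right (div_nonneg (Real.rpow_nonneg (hβ i) _) hq0.le) (hMc i)
      _ = 1 / q := by rw [← Finset.sum_div, sβ]
  have nn : ∀ i j, 0 ≤ (α i ^ p / p + β j ^ q / q - α i * β j) * M i j := fun i j =>
    mul_nonneg (sub_nonneg.2 (hy i j).1) (hM0 i j)
  have tot : ∑ i, ∑ j, (α i ^ p / p + β j ^ q / q - α i * β j) * M i j = 0 := by
    apply le_antisymm
    · simp only [sub_mul, add_mul, Finset.sum_sub_distrib, Finset.sum_add_distrib]
      linarith
    · exact Finset.sum_nonneg fun i _ => Finset.sum_nonneg fun j _ => nn i j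
  intro i j hij
  have z1 := (Finset.sum_eq_zero_iff_of_nonneg
    (fun i _ => Finset.sum_nonneg fun j _ => nn i j)).1 tot i (Finset.mem_univ _)
  have z2 := (Finset.sum_eq_zero_iff_of_nonneg (fun j _ => nn i j)).1 z1 j (Finset.mem_univ _)
  have hMpos : 0 < M i j := by
    have : 0 < ‖H i j‖ := norm_pos_iff.2 hij
    simp only [hM]; positivity
  rcases mul_eq_zero.1 z2 with h0 | h0
  · exact (hy i j).2 (by linarith)
  · exact absurd h0 hMpos.ne'

lemma hol_trace {n : ℕ} (E : Matrix (Fin n) (Fin n) ℂ) (hE : Eᴴ * E = 1) (d : Fin n → ℝ) :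
    (Matrix.trace (E * diagonal (fun i => (d i : ℂ)) * Eᴴ)).re = ∑ i, d i := by
  rw [Matrix.trace_mul_comm, ← mul_assoc, hE, one_mul, Matrix.trace_diagonal]
  simp

lemma hol_sum_pos {n : ℕ} (x : Matrix (Fin n) (Fin n) ℂ) (hx : x ≠ 0)
    (E : Matrix (Fin n) (Fin n) ℂ) (α : Fin n → ℝ) (hα : ∀ i, 0 ≤ α i)
    (h : ∀ f : ℝ → ℝ, cfc f (matAbs x) = E * diagonal (fun i => (f (α i) : ℂ)) * Eᴴ) (p : ℝ) :
    0 < ∑ i, α i ^ p := by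
  have hex : ∃ i, α i ≠ 0 := by
    by_contra! hc
    apply hx
    have hs : IsSelfAdjoint (matAbs x) := IsSelfAdjoint.of_nonneg (hol_abs_nonneg x)
    have h1 : matAbs x = 0 := by
      have := h (fun t => t)
      rw [cfc_id' ℝ (matAbs x)] at this
      rw [this]; simp [hc]
    have h2 := hol_abs_sq x
    rw [h1, mul_zero] at h2
    exact Matrix.conjTranspose_mul_self_eq_zero.1 h2.symm
  obtain ⟨i, hi⟩ := hex
  have hi' : 0 < α i := lt_of_le_of_ne (hα i) (Ne.symm hi)
  exact Finset.sum_pos' (fun j _ => Real.rpow_nonneg (hα j) p)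
    ⟨i, Finset.mem_univ _, Real.rpow_pos_of_pos hi' p⟩

lemma hol_schatten_one {n : ℕ} (x : Matrix (Fin n) (Fin n) ℂ) :
    schatten 1 x = (Matrix.trace (matAbs x)).re := by
  have hs : IsSelfAdjoint (matAbs x) := IsSelfAdjoint.of_nonneg (hol_abs_nonneg x)
  simp only [schatten, matRpow, Real.rpow_one, div_one]
  rw [cfc_id' ℝ (matAbs x)]

lemma hol_re_sum {n : ℕ} (G H : Matrix (Fin n) (Fin n) ℂ) (α β : Fin n → ℝ) :
    (Matrix.trace (G * diagonal (fun i => (α i : ℂ)) * H * diagonal (fun i => (β i : ℂ)))).re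
      = ∑ i, ∑ j, (α i * β j) * (G j i * H i j).re := by
  rw [Finset.sum_comm]
  simp only [Matrix.trace, Matrix.diag, Matrix.mul_diagonal]
  simp only [Matrix.mul_apply (M := G * _), Matrix.mul_diagonal]
  simp only [Complex.re_sum, Finset.sum_mul]
  refine Finset.sum_congr rfl fun j _ => Finset.sum_congr rfl fun i _ => ?_
  rw [← Complex.re_ofReal_mul]
  congr 1; push_cast; ring

open scoped Matrix.Norms.L2Operator in
lemma hol_norm_unitary {n : ℕ} (E : Matrix (Fin n) (Fin n) ℂ) (hE : Eᴴ * E = 1) : ‖E‖ ≤ 1 := by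
  have hn := Matrix.l2_opNorm_conjTranspose_mul_self E
  rw [hE] at hn
  have h1 : ‖(1 : Matrix (Fin n) (Fin n) ℂ)‖ ≤ 1 := by
    rw [← Matrix.diagonal_one, Matrix.l2_opNorm_diagonal]
    exact (pi_norm_le_iff_of_nonneg zero_le_one).2 fun i => by simp
  nlinarith [norm_nonneg E]

open scoped Matrix.Norms.L2Operator in
lemma hol_norm_mul {n : ℕ} {E F : Matrix (Fin n) (Fin n) ℂ} (hE : ‖E‖ ≤ 1) (hF : ‖F‖ ≤ 1) :
    ‖E * F‖ ≤ 1 := (norm_mul_le _ _).trans (mul_le_one₀ hE (norm_nonneg _) hF)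

open scoped Matrix.Norms.L2Operator in
lemma hol_forward {n : ℕ} (a b : Matrix (Fin n) (Fin n) ℂ) (p q : ℝ)
    (hp : 1 < p) (hq : 1 < q) (hpq : 1 / p + 1 / q = 1)
    (E F : Matrix (Fin n) (Fin n) ℂ) (α β : Fin n → ℝ) (hα : ∀ i, 0 ≤ α i) (hβ : ∀ i, 0 ≤ β i)
    (hE : Eᴴ * E = 1) (hE' : E * Eᴴ = 1) (hF : Fᴴ * F = 1) (hF' : F * Fᴴ = 1)
    (hA : matAbs a = E * diagonal (fun i => (α i : ℂ)) * Eᴴ)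
    (hB : matAbs b = F * diagonal (fun i => (β i : ℂ)) * Fᴴ)
    (sα : 0 < ∑ i, α i ^ p) (sβ : 0 < ∑ i, β i ^ q)
    (h : schatten 1 (a * bᴴ) = (∑ i, α i ^ p) ^ (1 / p) * (∑ i, β i ^ q) ^ (1 / q)) :
    (∑ i, α i ^ p)⁻¹ • (E * diagonal (fun i => ((α i ^ p : ℝ) : ℂ)) * Eᴴ) =
    (∑ i, β i ^ q)⁻¹ • (F * diagonal (fun i => ((β i ^ q : ℝ) : ℂ)) * Fᴴ) := by
  have hp0 : 0 < p := by linarith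
  have hq0 : 0 < q := by linarith
  obtain ⟨U, hU, eU, -, -⟩ := hol_polar a
  obtain ⟨V, hV, eV, -, -⟩ := hol_polar b
  obtain ⟨W, hW, -, eW, -⟩ := hol_polar (a * bᴴ)
  have ct : ∀ {X : Matrix (Fin n) (Fin n) ℂ}, ‖X‖ ≤ 1 → ‖Xᴴ‖ ≤ 1 := fun h => by
    rwa [Matrix.l2_opNorm_conjTranspose]
  set G := Fᴴ * (Vᴴ * (Wᴴ * (U * E))) with hG
  set H := Eᴴ * F with hH
  have nE := hol_norm_unitary E hE
  have nF := hol_norm_unitary F hF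
  have nG : ‖G‖ ≤ 1 := hol_norm_mul (ct nF) (hol_norm_mul (ct hV)
    (hol_norm_mul (ct hW) (hol_norm_mul hU nE)))
  have nH : ‖H‖ ≤ 1 := hol_norm_mul (ct nE) nF
  have hBs : (matAbs b)ᴴ = matAbs b := IsSelfAdjoint.of_nonneg (hol_abs_nonneg b)
  have key : schatten 1 (a * bᴴ) = ∑ i, ∑ j, (α i * β j) * (G j i * H i j).re := by
    rw [hol_schatten_one, ← eW, ← hol_re_sum]
    congr 1
    have e : Wᴴ * (a * bᴴ) = (Wᴴ * U * matAbs a * matAbs b) * Vᴴ := by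
      conv_lhs => rw [eU, eV]
      rw [conjTranspose_mul, hBs]
      simp only [mul_assoc]
    rw [e, Matrix.trace_mul_comm, hA, hB]
    have e2 : Vᴴ * (Wᴴ * U * (E * diagonal (fun i => (α i : ℂ)) * Eᴴ) *
        (F * diagonal (fun i => (β i : ℂ)) * Fᴴ)) = (Vᴴ * (Wᴴ * (U * E)) *
        diagonal (fun i => (α i : ℂ)) * H * diagonal (fun i => (β i : ℂ))) * Fᴴ := by
      simp only [hH, mul_assoc]
    rw [e2, Matrix.trace_mul_comm]
    simp only [hG, mul_assoc]
  set S := ∑ i, α i ^ p with hS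
  set T := ∑ i, β i ^ q with hT
  have pS : 0 < S ^ (1 / p) := Real.rpow_pos_of_pos sα _
  have pT : 0 < T ^ (1 / q) := Real.rpow_pos_of_pos sβ _
  have eα : ∀ i, (α i / S ^ (1 / p)) ^ p = α i ^ p / S := fun i => by
    rw [Real.div_rpow (hα i) pS.le, one_div, Real.rpow_inv_rpow sα.le hp0.ne']
  have eβ : ∀ i, (β i / T ^ (1 / q)) ^ q = β i ^ q / T := fun i => by
    rw [Real.div_rpow (hβ i) pT.le, one_div, Real.rpow_inv_rpow sβ.le hq0.ne']
  have core := hol_core G H (fun i => α i / S ^ (1 / p)) (fun i => β i / T ^ (1 / q))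
    (fun i => div_nonneg (hα i) pS.le) (fun i => div_nonneg (hβ i) pT.le) hp hq hpq
    (by simp only [eα]; rw [← Finset.sum_div, ← hS, div_self sα.ne'])
    (by simp only [eβ]; rw [← Finset.sum_div, ← hT, div_self sβ.ne'])
    (hol_col G nG) (hol_row G nG) (hol_row H nH) (hol_col H nH) (by
      have : ∀ i j, α i / S ^ (1 / p) * (β j / T ^ (1 / q)) * (G j i * H i j).re
        = (α i * β j) * (G j i * H i j).re / (S ^ (1 / p) * T ^ (1 / q)) := fun i j => by
          field_simp
      simp only [this, ← Finset.sum_div]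
      rw [← key, h, div_self (mul_pos pS pT).ne'])
  simp only [eα, eβ] at core
  have comm : (S⁻¹ • diagonal (fun i => ((α i ^ p : ℝ) : ℂ))) * H
      = H * (T⁻¹ • diagonal (fun i => ((β i ^ q : ℝ) : ℂ))) := by
    ext i j
    rw [smul_mul_assoc, mul_smul_comm, Matrix.smul_apply, Matrix.smul_apply, Matrix.diagonal_mul,
      Matrix.mul_diagonal]
    by_cases hij : H i j = 0
    · simp [hij]
    · have := core i j hij
      rw [Complex.real_smul, Complex.real_smul, ← mul_assoc, mul_comm (H i j), ← mul_assoc,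
        ← Complex.ofReal_mul, ← Complex.ofReal_mul, inv_mul_eq_div, this, inv_mul_eq_div]
  have := congrArg (fun X => E * X * Fᴴ) comm
  simp only [hH] at this
  calc _ = E * (S⁻¹ • diagonal (fun i => ((α i ^ p : ℝ) : ℂ)) * (Eᴴ * F)) * Fᴴ := by
        simp only [smul_mul_assoc, mul_smul_comm, mul_assoc, hF', mul_one]
    _ = _ := this
    _ = (E * Eᴴ) * F * (T⁻¹ • diagonal (fun i => ((β i ^ q : ℝ) : ℂ))) * Fᴴ := by
        simp only [mul_assoc]
    _ = _ := by rw [hE', one_mul, mul_smul_comm, smul_mul_assoc]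

lemma hol_backward {n : ℕ} (a b : Matrix (Fin n) (Fin n) ℂ) (p q c : ℝ)
    (hp : 1 < p) (hq : 1 < q) (hpq : 1 / p + 1 / q = 1) (hc : 0 ≤ c)
    (h : matRpow (matAbs a) p = c • matRpow (matAbs b) q) :
    schatten 1 (a * bᴴ) = c ^ (1 / p) * (Matrix.trace (matRpow (matAbs b) q)).re := by
  have hp0 : 0 < p := by linarith
  have hq0 : 0 < q := by linarith
  obtain ⟨V, -, eV, -, eV2⟩ := hol_polar b
  have hsq := hol_abs_sq a
  have hA := hol_abs_nonneg a
  have hB := hol_abs_nonneg b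
  rw [hol_schatten_one]
  set A := matAbs a with hAd
  set B := matAbs b with hBd
  have hAs : IsSelfAdjoint A := IsSelfAdjoint.of_nonneg hA
  have hBs : IsSelfAdjoint B := IsSelfAdjoint.of_nonneg hB
  have co : ∀ (X : Matrix (Fin n) (Fin n) ℂ) (f : ℝ → ℝ), ContinuousOn f (spectrum ℝ X) :=
    fun X f => Matrix.finite_real_spectrum.continuousOn f
  have e1 : cfc (fun t : ℝ => t) B = B := cfc_id' ℝ B
  have e2 : A = cfc (fun t : ℝ => (c * t ^ q) ^ (1 / p)) B := by
    rw [cfc_comp' (fun s : ℝ => s ^ (1 / p)) (fun t : ℝ => c * t ^ q) B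
      (Matrix.finite_real_spectrum.image _ |>.continuousOn _) (co _ _),
      cfc_const_mul c _ B (co _ _)]
    change A = cfc (fun s : ℝ => s ^ (1 / p)) (c • matRpow B q)
    rw [← h, matRpow, ← cfc_comp' (fun s : ℝ => s ^ (1 / p)) (fun t : ℝ => t ^ p) A
      (Matrix.finite_real_spectrum.image _ |>.continuousOn _) (co _ _)]
    conv_lhs => rw [← cfc_id' ℝ A]
    refine cfc_congr fun t ht => ?_
    have ht0 : 0 ≤ t := spectrum_nonneg_of_nonneg hA ht
    simp only [one_div]
    rw [Real.rpow_rpow_inv ht0 hp0.ne']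
  set D := cfc (fun t : ℝ => c ^ (1 / p) * t ^ q) B with hD
  have hfun : ∀ t ∈ spectrum ℝ B, t * (c * t ^ q) ^ (1 / p) = c ^ (1 / p) * t ^ q := by
    intro t ht
    have ht0 : 0 ≤ t := spectrum_nonneg_of_nonneg hB ht
    rw [Real.mul_rpow hc (Real.rpow_nonneg ht0 _), ← Real.rpow_mul ht0]
    rcases ht0.eq_or_lt with h0 | h0
    · rw [← h0, Real.zero_rpow hq0.ne']; simp
    · have : q = 1 + q * (1 / p) := by
        have : 1 / p = 1 - 1 / q := by linarith
        rw [this]; field_simp; ring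
      conv_rhs => rw [this, Real.rpow_add h0, Real.rpow_one]
      ring
  have hBA : B * A = D := by
    rw [e2, hD]
    nth_rewrite 1 [← e1]
    rw [hol_cfc_mul]
    exact cfc_congr hfun
  have hAB : A * B = D := by
    rw [e2, hD]
    nth_rewrite 2 [← e1]
    rw [hol_cfc_mul]
    exact cfc_congr fun t ht => (mul_comm _ _).trans (hfun t ht)
  have hD0 : 0 ≤ D := cfc_nonneg fun t ht => by
    have ht0 : 0 ≤ t := spectrum_nonneg_of_nonneg hB ht
    positivity
  have hVD : Vᴴ * V * D = D := by rw [← hBA, ← mul_assoc, eV2]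
  have habs : matAbs (a * bᴴ) = V * D * Vᴴ := by
    refine CFC.sqrt_unique ?_ (star_right_conjugate_nonneg hD0 V)
    have : (a * bᴴ)ᴴ * (a * bᴴ) = b * (A * A) * bᴴ := by
      rw [hsq, conjTranspose_mul, conjTranspose_conjTranspose]; simp only [mul_assoc]
    rw [this]
    calc V * D * Vᴴ * (V * D * Vᴴ) = V * D * (Vᴴ * V * D) * Vᴴ := by simp only [mul_assoc]
      _ = V * (B * A) * (A * B) * Vᴴ := by rw [hVD, hBA, hAB]
      _ = (V * B) * (A * A) * (B * Vᴴ) := by simp only [mul_assoc]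
      _ = _ := by
        rw [← eV]; congr 1
        conv_rhs => rw [eV, conjTranspose_mul, show Bᴴ = B from hBs]
  rw [habs, Matrix.trace_mul_comm, ← mul_assoc, hVD, hD, cfc_const_mul _ _ B (co _ _),
    Matrix.trace_smul]
  simp [matRpow]

theorem holder_equality_iff_normalized {n : ℕ} (hn : 1 ≤ n)
    (a b : Matrix (Fin n) (Fin n) ℂ) (ha : a ≠ 0) (hb : b ≠ 0) (p q : ℝ)
    (hp : 1 < p) (hq : 1 < q) (hpq : 1 / p + 1 / q = 1) :
    schatten 1 (a * bᴴ) = schatten p a * schatten q b ↔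
      (schatten p a ^ p)⁻¹ • matRpow (matAbs a) p
        = (schatten q b ^ q)⁻¹ • matRpow (matAbs b) q := by
  have hp0 : 0 < p := by linarith
  have hq0 : 0 < q := by linarith
  obtain ⟨E, α, hE, hE', hα, hcA⟩ := hol_spec _ (hol_abs_nonneg a)
  obtain ⟨F, β, hF, hF', hβ, hcB⟩ := hol_spec _ (hol_abs_nonneg b)
  have sα := hol_sum_pos a ha E α hα hcA p
  have sβ := hol_sum_pos b hb F β hβ hcB q
  have hAs : IsSelfAdjoint (matAbs a) := IsSelfAdjoint.of_nonneg (hol_abs_nonneg a)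
  have hBs : IsSelfAdjoint (matAbs b) := IsSelfAdjoint.of_nonneg (hol_abs_nonneg b)
  have tA : (Matrix.trace (matRpow (matAbs a) p)).re = ∑ i, α i ^ p := by
    rw [matRpow, hcA, hol_trace E hE (fun i => α i ^ p)]
  have tB : (Matrix.trace (matRpow (matAbs b) q)).re = ∑ i, β i ^ q := by
    rw [matRpow, hcB, hol_trace F hF (fun i => β i ^ q)]
  have nA : schatten p a = (∑ i, α i ^ p) ^ (1 / p) := by rw [schatten, tA]
  have nB : schatten q b = (∑ i, β i ^ q) ^ (1 / q) := by rw [schatten, tB]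
  have nA' : schatten p a ^ p = ∑ i, α i ^ p := by
    rw [nA, one_div, Real.rpow_inv_rpow sα.le hp0.ne']
  have nB' : schatten q b ^ q = ∑ i, β i ^ q := by
    rw [nB, one_div, Real.rpow_inv_rpow sβ.le hq0.ne']
  rw [nA', nB', nA, nB]
  constructor
  · intro h
    rw [matRpow, matRpow, hcA, hcB]
    exact hol_forward a b p q hp hq hpq E F α β hα hβ hE hE' hF hF'
      (by rw [← hcA (fun t => t), cfc_id' ℝ (matAbs a)])
      (by rw [← hcB (fun t => t), cfc_id' ℝ (matAbs b)]) sα sβ h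
  · intro h
    set S := ∑ i, α i ^ p
    set T := ∑ i, β i ^ q
    have h' : matRpow (matAbs a) p = (S / T) • matRpow (matAbs b) q := by
      rw [div_eq_mul_inv, mul_smul, ← h, smul_smul, mul_inv_cancel₀ sα.ne', one_smul]
    rw [hol_backward a b p q (S / T) hp hq hpq (div_pos sα sβ).le h', tB,
      Real.div_rpow sα.le sβ.le, div_mul_eq_mul_div, mul_div_assoc]
    congr 1
    have : 1 / q = 1 - 1 / p := by linarith
    rw [this, Real.rpow_sub sβ, Real.rpow_one]
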